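/- Entropy decay of the up-down walk: For every 1 ≤ k ≤ d and every strictly positive g : 𝒞(k−1) → ℝ_{>0}, 𝔈_{P_{k−1}^∧}(g, log g) ≥ Ent_{π_{k−1}}(g) − Ent_{π_k}(P_k^↓ g). -/

import Mathlib

/-!
The up operator is the adjoint of the down operator: for `h` on `C(m)` and `F` on `C(m+1)`,
`⟨h, P_m^↑ F⟩_{π_m} = ⟨P_{m+1}^↓ h, F⟩_{π_{m+1}}` (`sum_piLev_mul_upOp`). This is the detailed
balance relation `π_m(S) P_m^↑(S, T) = π_{m+1}(T) / (m+1)` for `S ⊂ T`, which follows from the double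
count `Σ_{T ∈ C(m+1), T ⊇ S} w(T) = (d - m) w(S)` of the top-level weights (`sum_wgt_above`).

With `m = k - 1`, adjointness gives
`𝔈(g, log g) = E_{π_m}[g log g] - E_{π_k}[(P_k^↓ g) (P_k^↓ log g)]`, and it also shows that
`g` and `P_k^↓ g` have the same mean, so the right-hand side of the claim is
`E_{π_m}[g log g] - E_{π_k}[(P_k^↓ g) log (P_k^↓ g)]`. The claim is therefore a consequence of the
pointwise inequality `P_k^↓ log g ≤ log P_k^↓ g`, which is Jensen for the concave logarithm
(`downOp_log_le`).
-/

open Finset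

noncomputable section

variable {E : Type*} [Fintype E] [DecidableEq E]

/-- The faces of cardinality `k` of the set family `C`. -/
def faces (C : Finset (Finset E)) (k : ℕ) : Finset (Finset E) :=
  C.filter fun S => S.card = k

/-- `C` is a pure simplicial complex of dimension `d`: it is nonempty, closed under
taking subsets, and every face is contained in a face of cardinality `d`
(hence all maximal faces have cardinality `d`). -/
def IsPureComplex (C : Finset (Finset E)) (d : ℕ) : Prop :=
  C.Nonempty ∧ (∀ S ∈ C, ∀ T ⊆ S, T ∈ C) ∧ (∀ S ∈ C, ∃ T ∈ C, S ⊆ T ∧ T.card = d)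

/-- `pid` is a probability distribution with full support on the top level faces. -/
def IsTopDist (C : Finset (Finset E)) (d : ℕ) (pid : Finset E → ℝ) : Prop :=
  (∀ T ∈ faces C d, 0 < pid T) ∧ ∑ T ∈ faces C d, pid T = 1

/-- The (unnormalised) weight of a face: total top-level mass above it. -/
def wgt (C : Finset (Finset E)) (d : ℕ) (pid : Finset E → ℝ) (S : Finset E) : ℝ :=
  ∑ T ∈ (faces C d).filter (fun T => S ⊆ T), pid T

/-- The distribution `π_k` at level `k`: `π_k(S) ∝ Σ_{T ∈ C(d), T ⊇ S} π_d(T)`. -/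
def piLev (C : Finset (Finset E)) (d : ℕ) (pid : Finset E → ℝ) (k : ℕ) (S : Finset E) : ℝ :=
  if S ∈ faces C k then wgt C d pid S / ∑ T ∈ faces C k, wgt C d pid T else 0

/-- The level-`k` faces of the link of the face `S`. -/
def linkFaces (C : Finset (Finset E)) (S : Finset E) (k : ℕ) : Finset (Finset E) :=
  Finset.univ.powerset.filter fun T => S ∩ T = ∅ ∧ S ∪ T ∈ C ∧ T.card = k

/-- The distribution `π_{S,k}` on the level-`k` faces of the link of `S`:
`π_{S,k}(T) ∝ π_{|S|+k}(S ∪ T)`. -/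
def linkPi (C : Finset (Finset E)) (d : ℕ) (pid : Finset E → ℝ) (S : Finset E) (k : ℕ)
    (T : Finset E) : ℝ :=
  if T ∈ linkFaces C S k then
    piLev C d pid (S.card + k) (S ∪ T) /
      ∑ T' ∈ linkFaces C S k, piLev C d pid (S.card + k) (S ∪ T')
  else 0

/-- Generic up operator with respect to a measure `ν` on a collection `dom` of faces:
from `R` move to a superset `T ∈ dom` with probability proportional to `ν T`.
Acts on functions on `dom`, producing a function on the level below. -/
def upWith (ν : Finset E → ℝ) (dom : Finset (Finset E)) (f : Finset E → ℝ) (R : Finset E) : ℝ :=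
  ∑ T ∈ dom.filter (fun T => R ⊆ T),
    (ν T / ∑ T' ∈ dom.filter (fun T' => R ⊆ T'), ν T') * f T

/-- The up operator `P_k^↑`, acting on functions on `C(k+1)` and producing a function
on `C(k)`. -/
def upOp (C : Finset (Finset E)) (d : ℕ) (pid : Finset E → ℝ) (k : ℕ) :
    (Finset E → ℝ) → Finset E → ℝ :=
  upWith (piLev C d pid (k+1)) (faces C (k+1))

/-- The down operator `P_k^↓` (uniform removal of an element), acting on functions
on `C(k-1)` and producing a function on `C(k)`. -/
def downOp (k : ℕ) (g : Finset E → ℝ) (S : Finset E) : ℝ :=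
  (1 / (k : ℝ)) * ∑ i ∈ S, g (S.erase i)

/-- The down-up walk `P_k^∨ = P_k^↓ P_{k-1}^↑` on `C(k)`, as an operator on functions. -/
def downUp (C : Finset (Finset E)) (d : ℕ) (pid : Finset E → ℝ) (k : ℕ)
    (f : Finset E → ℝ) : Finset E → ℝ :=
  downOp k (upOp C d pid (k-1) f)

/-- The up-down walk `P_k^∧ = P_k^↑ P_{k+1}^↓` on `C(k)`, as an operator on functions. -/
def upDown (C : Finset (Finset E)) (d : ℕ) (pid : Finset E → ℝ) (k : ℕ)
    (f : Finset E → ℝ) : Finset E → ℝ :=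
  upOp C d pid k (downOp (k+1) f)

/-- The up operator `P_{S,k}^↑` on the link of `S`, acting on functions on `C_S(k+1)`
and producing a function on `C_S(k)`. -/
def linkUp (C : Finset (Finset E)) (d : ℕ) (pid : Finset E → ℝ) (S : Finset E) (k : ℕ) :
    (Finset E → ℝ) → Finset E → ℝ :=
  upWith (linkPi C d pid S (k+1)) (linkFaces C S (k+1))

/-- The up-down walk `P_{S,k}^∧` on the level-`k` faces of the link of `S`. -/
def linkUpDown (C : Finset (Finset E)) (d : ℕ) (pid : Finset E → ℝ) (S : Finset E) (k : ℕ)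
    (f : Finset E → ℝ) : Finset E → ℝ :=
  linkUp C d pid S k (downOp (k+1) f)

/-- The local walk `G_S := 2 P_{S,1}^∧ - I` on the vertices of the link of `S`. -/
def localWalk (C : Finset (Finset E)) (d : ℕ) (pid : Finset E → ℝ) (S : Finset E)
    (f : Finset E → ℝ) (T : Finset E) : ℝ :=
  2 * linkUpDown C d pid S 1 f T - f T

/-- Variance of `f` with respect to the measure `μ` on `dom`. -/
def pVar (μ : Finset E → ℝ) (dom : Finset (Finset E)) (f : Finset E → ℝ) : ℝ :=
  (∑ x ∈ dom, μ x * f x ^ 2) - (∑ x ∈ dom, μ x * f x) ^ 2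

/-- Relative entropy `Ent_μ(f) = E_μ[f log f] - E_μ[f] log E_μ[f]` of `f` with respect to
the measure `μ` on `dom` (note `Real.log 0 = 0`, giving the convention `0 log 0 = 0`). -/
def pEnt (μ : Finset E → ℝ) (dom : Finset (Finset E)) (f : Finset E → ℝ) : ℝ :=
  (∑ x ∈ dom, μ x * (f x * Real.log (f x))) -
    (∑ x ∈ dom, μ x * f x) * Real.log (∑ x ∈ dom, μ x * f x)

/-- The Dirichlet form `𝔈_P(f,g) = Σ_x μ(x) f(x) ((I - P) g)(x)` of a Markov operator `P`
reversible with respect to `μ` on `dom`. -/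
def pDiri (μ : Finset E → ℝ) (dom : Finset (Finset E))
    (P : (Finset E → ℝ) → Finset E → ℝ) (f g : Finset E → ℝ) : ℝ :=
  ∑ x ∈ dom, μ x * f x * (g x - P g x)

/-- The second largest eigenvalue of a Markov operator `P` reversible with respect to the
distribution `μ` on `dom`, via the variational characterisation: the supremum of Rayleigh
quotients `⟨f, Pf⟩_μ / ⟨f, f⟩_μ` over `f` orthogonal to the constants in `L²(μ)`. -/
noncomputable def lamTwo (μ : Finset E → ℝ) (dom : Finset (Finset E))
    (P : (Finset E → ℝ) → Finset E → ℝ) : ℝ :=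
  sSup {r : ℝ | ∃ f : Finset E → ℝ,
    (∑ x ∈ dom, μ x * f x = 0) ∧ (∑ x ∈ dom, μ x * f x ^ 2 ≠ 0) ∧
    r = (∑ x ∈ dom, μ x * f x * P f x) / ∑ x ∈ dom, μ x * f x ^ 2}

/-- The modified log-Sobolev constant `ρ(P)` of a Markov operator `P` reversible with
respect to `μ` on `dom`. -/
noncomputable def mlsConst (μ : Finset E → ℝ) (dom : Finset (Finset E))
    (P : (Finset E → ℝ) → Finset E → ℝ) : ℝ :=
  sInf {r : ℝ | ∃ f : Finset E → ℝ, (∀ x ∈ dom, 0 < f x) ∧ pEnt μ dom f ≠ 0 ∧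
    r = pDiri μ dom P f (fun x => Real.log (f x)) / pEnt μ dom f}

lemma mem_faces {C : Finset (Finset E)} {k : ℕ} {S : Finset E} :
    S ∈ faces C k ↔ S ∈ C ∧ S.card = k := by
  simp [faces]

lemma wgt_pos {C : Finset (Finset E)} {d : ℕ} {pid : Finset E → ℝ} (hC : IsPureComplex C d)
    (hpid : IsTopDist C d pid) {S : Finset E} (hS : S ∈ C) : 0 < wgt C d pid S := by
  obtain ⟨T, hT, hST, hc⟩ := hC.2.2 S hS
  refine Finset.sum_pos (fun U hU => hpid.1 U (Finset.mem_filter.1 hU).1)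
    ⟨T, Finset.mem_filter.2 ⟨mem_faces.2 ⟨hT, hc⟩, hST⟩⟩

lemma piLev_nonneg {C : Finset (Finset E)} {d : ℕ} {pid : Finset E → ℝ} (hC : IsPureComplex C d)
    (hpid : IsTopDist C d pid) (k : ℕ) (S : Finset E) : 0 ≤ piLev C d pid k S := by
  unfold piLev
  split_ifs with h
  · exact div_nonneg (wgt_pos hC hpid (mem_faces.1 h).1).le
      (Finset.sum_nonneg fun T hT => (wgt_pos hC hpid (mem_faces.1 hT).1).le)
  · exact le_rfl

lemma sum_wgt_pos {C : Finset (Finset E)} {d : ℕ} {pid : Finset E → ℝ} (hC : IsPureComplex C d)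
    (hpid : IsTopDist C d pid) {k : ℕ} (hk : k ≤ d) : 0 < ∑ T ∈ faces C k, wgt C d pid T := by
  refine Finset.sum_pos (fun T hT => wgt_pos hC hpid (mem_faces.1 hT).1) ?_
  obtain ⟨S, hS⟩ := hC.1
  obtain ⟨T, hT, -, hc⟩ := hC.2.2 S hS
  obtain ⟨R, hR, hRc⟩ := Finset.exists_subset_card_eq (hc.symm ▸ hk : k ≤ T.card)
  exact ⟨R, mem_faces.2 ⟨hC.2.1 T hT R hR, hRc⟩⟩

/-- Below a face `U` of cardinality `d`, a face `S` of cardinality `m` is covered by `d - m`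
faces. -/
lemma card_between {C : Finset (Finset E)} {d m : ℕ} (hC : IsPureComplex C d) {S U : Finset E}
    (hS : S.card = m) (hU : U ∈ faces C d) (hSU : S ⊆ U) :
    (((faces C (m + 1)).filter (fun T => S ⊆ T)).filter (fun T => T ⊆ U)).card = d - m := by
  obtain ⟨hUC, hUc⟩ := mem_faces.1 hU
  have himg : ((faces C (m + 1)).filter (fun T => S ⊆ T)).filter (fun T => T ⊆ U)
      = (U \ S).image (fun i => insert i S) := by
    ext T
    simp only [Finset.mem_filter, mem_faces, Finset.mem_image, Finset.mem_sdiff]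
    constructor
    · rintro ⟨⟨⟨-, hTc⟩, hST⟩, hTU⟩
      obtain ⟨a, ha, rfl⟩ := Finset.exists_eq_insert_iff.2 ⟨hST, by rw [hS, hTc]⟩
      exact ⟨a, ⟨hTU (Finset.mem_insert_self a S), ha⟩, rfl⟩
    · rintro ⟨a, ⟨haU, haS⟩, rfl⟩
      have hsub : insert a S ⊆ U := Finset.insert_subset haU hSU
      exact ⟨⟨⟨hC.2.1 U hUC _ hsub, by rw [Finset.card_insert_of_notMem haS, hS]⟩,
        Finset.subset_insert a S⟩, hsub⟩
  rw [himg, Finset.card_image_of_injOn, Finset.card_sdiff_of_subset hSU, hS, hUc]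
  intro a ha b hb hab
  have ha' : a ∉ S := (Finset.mem_sdiff.1 ha).2
  have hmem : a ∈ insert b S := by
    rw [← show insert a S = insert b S from hab]
    exact Finset.mem_insert_self a S
  exact (Finset.mem_insert.1 hmem).resolve_right ha'

/-- The weights one level above `S` add up to `(d - m) w(S)`: every top face above `S` is counted
once for each face between it and `S`. -/
lemma sum_wgt_above {C : Finset (Finset E)} {d m : ℕ} {pid : Finset E → ℝ}
    (hC : IsPureComplex C d) {S : Finset E} (hS : S.card = m) :
    ∑ T ∈ (faces C (m + 1)).filter (fun T => S ⊆ T), wgt C d pid T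
      = ((d - m : ℕ) : ℝ) * wgt C d pid S := by
  unfold wgt
  rw [Finset.sum_comm' (t' := (faces C d).filter (fun U => S ⊆ U))
    (s' := fun U => ((faces C (m + 1)).filter (fun T => S ⊆ T)).filter (fun T => T ⊆ U))]
  · rw [Finset.mul_sum]
    refine Finset.sum_congr rfl fun U hU => ?_
    obtain ⟨hU, hSU⟩ := Finset.mem_filter.1 hU
    rw [Finset.sum_const, card_between hC hS hU hSU, nsmul_eq_mul]
  · intro T U
    simp only [Finset.mem_filter]
    constructor
    · rintro ⟨⟨hT, hST⟩, hU, hTU⟩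
      exact ⟨⟨⟨hT, hST⟩, hTU⟩, hU, hST.trans hTU⟩
    · rintro ⟨⟨⟨hT, hST⟩, hTU⟩, hU, -⟩
      exact ⟨⟨hT, hST⟩, hU, hTU⟩

lemma erase_mem_faces {C : Finset (Finset E)} {d m : ℕ} (hC : IsPureComplex C d) {T : Finset E}
    (hT : T ∈ faces C (m + 1)) {i : E} (hi : i ∈ T) : T.erase i ∈ faces C m := by
  obtain ⟨hTC, hTc⟩ := mem_faces.1 hT
  exact mem_faces.2 ⟨hC.2.1 T hTC _ (Finset.erase_subset i T), by
    rw [Finset.card_erase_of_mem hi, hTc, Nat.add_sub_cancel]⟩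

/-- Removing one element of `T` enumerates the faces one level below `T`. -/
lemma sum_erase {C : Finset (Finset E)} {d m : ℕ} (hC : IsPureComplex C d) {T : Finset E}
    (hT : T ∈ faces C (m + 1)) (h : Finset E → ℝ) :
    ∑ i ∈ T, h (T.erase i) = ∑ S ∈ (faces C m).filter (fun S => S ⊆ T), h S := by
  refine Finset.sum_bij (fun i _ => T.erase i) ?_ ?_ ?_ (fun _ _ => rfl)
  · intro i hi
    exact Finset.mem_filter.2 ⟨erase_mem_faces hC hT hi, Finset.erase_subset i T⟩
  · intro i hi j hj hij
    exact Finset.erase_injOn T hi hj hij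
  · intro S hS
    obtain ⟨hS, hST⟩ := Finset.mem_filter.1 hS
    obtain ⟨a, ha, rfl⟩ := Finset.exists_eq_insert_iff.2
      ⟨hST, by rw [(mem_faces.1 hS).2, (mem_faces.1 hT).2]⟩
    exact ⟨a, Finset.mem_insert_self a S, Finset.erase_insert ha⟩

/-- Summation over covering pairs `S ⊂ T` of levels `m` and `m + 1`, in either order. -/
lemma sum_pairs {C : Finset (Finset E)} {d m : ℕ} (hC : IsPureComplex C d)
    (F h : Finset E → ℝ) :
    ∑ T ∈ faces C (m + 1), F T * ∑ i ∈ T, h (T.erase i)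
      = ∑ S ∈ faces C m, h S * ∑ T ∈ (faces C (m + 1)).filter (fun T => S ⊆ T), F T := by
  rw [Finset.sum_congr rfl fun T hT => by rw [sum_erase hC hT h]]
  simp_rw [Finset.mul_sum]
  rw [Finset.sum_comm' (t' := faces C m)
    (s' := fun S => (faces C (m + 1)).filter (fun T => S ⊆ T))]
  · exact Finset.sum_congr rfl fun S _ => Finset.sum_congr rfl fun T _ => mul_comm _ _
  · intro T S
    simp only [Finset.mem_filter]
    tauto

/-- The normalising constants of consecutive levels: `(m + 1) Z_{m+1} = (d - m) Z_m`. -/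
lemma sum_wgt_succ {C : Finset (Finset E)} {d m : ℕ} {pid : Finset E → ℝ}
    (hC : IsPureComplex C d) :
    ((m : ℝ) + 1) * ∑ T ∈ faces C (m + 1), wgt C d pid T
      = ((d - m : ℕ) : ℝ) * ∑ S ∈ faces C m, wgt C d pid S := by
  have h := sum_pairs (m := m) hC (wgt C d pid) (fun _ => 1)
  rw [Finset.mul_sum, Finset.mul_sum]
  calc _ = ∑ T ∈ faces C (m + 1), wgt C d pid T * ∑ i ∈ T, (1 : ℝ) := by
        refine Finset.sum_congr rfl fun T hT => ?_
        rw [Finset.sum_const, (mem_faces.1 hT).2, nsmul_eq_mul]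
        push_cast
        ring
    _ = _ := h
    _ = _ := by
        refine Finset.sum_congr rfl fun S hS => ?_
        rw [sum_wgt_above hC (mem_faces.1 hS).2, one_mul]

/-- The level-`(m + 1)` mass above `S` is `(m + 1) π_m(S)`. -/
lemma sum_piLev_above {C : Finset (Finset E)} {d m : ℕ} {pid : Finset E → ℝ}
    (hC : IsPureComplex C d) (hpid : IsTopDist C d pid) (hm : m + 1 ≤ d) {S : Finset E}
    (hS : S ∈ faces C m) :
    ∑ T ∈ (faces C (m + 1)).filter (fun T => S ⊆ T), piLev C d pid (m + 1) T
      = ((m : ℝ) + 1) * piLev C d pid m S := by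
  have hZ := sum_wgt_pos hC hpid hm
  have hZ' := sum_wgt_pos hC hpid (Nat.le_of_succ_le hm)
  have hrel := sum_wgt_succ (m := m) (pid := pid) hC
  have hsum : ∑ T ∈ (faces C (m + 1)).filter (fun T => S ⊆ T), piLev C d pid (m + 1) T
      = (((d - m : ℕ) : ℝ) * wgt C d pid S) / ∑ T ∈ faces C (m + 1), wgt C d pid T := by
    rw [← sum_wgt_above hC (mem_faces.1 hS).2, Finset.sum_div]
    refine Finset.sum_congr rfl fun T hT => ?_
    rw [piLev, if_pos (Finset.mem_filter.1 hT).1]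
  rw [hsum, piLev, if_pos hS, mul_div_assoc', div_eq_div_iff hZ.ne' hZ'.ne']
  linear_combination (-(wgt C d pid S)) * hrel

lemma piLev_pos {C : Finset (Finset E)} {d m : ℕ} {pid : Finset E → ℝ}
    (hC : IsPureComplex C d) (hpid : IsTopDist C d pid) (hm : m ≤ d) {S : Finset E}
    (hS : S ∈ faces C m) : 0 < piLev C d pid m S := by
  rw [piLev, if_pos hS]
  exact div_pos (wgt_pos hC hpid (mem_faces.1 hS).1) (sum_wgt_pos hC hpid hm)

/-- The up operator `P_m^↑` is the adjoint of the down operator `P_{m+1}^↓`. -/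
lemma sum_piLev_mul_upOp {C : Finset (Finset E)} {d m : ℕ} {pid : Finset E → ℝ}
    (hC : IsPureComplex C d) (hpid : IsTopDist C d pid) (hm : m + 1 ≤ d) (h F : Finset E → ℝ) :
    ∑ S ∈ faces C m, piLev C d pid m S * h S * upOp C d pid m F S
      = ∑ T ∈ faces C (m + 1), piLev C d pid (m + 1) T * downOp (m + 1) h T * F T := by
  have hm1 : (m : ℝ) + 1 ≠ 0 := by positivity
  have hpairs := sum_pairs (m := m) hC
    (fun T => piLev C d pid (m + 1) T * F T * (1 / ((m : ℝ) + 1))) h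
  calc _ = ∑ S ∈ faces C m, h S * ∑ T ∈ (faces C (m + 1)).filter (fun T => S ⊆ T),
          piLev C d pid (m + 1) T * F T * (1 / ((m : ℝ) + 1)) := by
        refine Finset.sum_congr rfl fun S hS => ?_
        have hpos := (piLev_pos hC hpid (Nat.le_of_succ_le hm) hS).ne'
        rw [upOp, upWith, sum_piLev_above hC hpid hm hS, Finset.mul_sum, Finset.mul_sum]
        refine Finset.sum_congr rfl fun T _ => ?_
        field_simp
    _ = _ := hpairs.symm
    _ = _ := by
        refine Finset.sum_congr rfl fun T _ => ?_
        rw [downOp]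
        push_cast
        ring

/-- `P_{m+1}^↓` preserves the mean. -/
lemma sum_piLev_mul_downOp {C : Finset (Finset E)} {d m : ℕ} {pid : Finset E → ℝ}
    (hC : IsPureComplex C d) (hpid : IsTopDist C d pid) (hm : m + 1 ≤ d) (h : Finset E → ℝ) :
    ∑ T ∈ faces C (m + 1), piLev C d pid (m + 1) T * downOp (m + 1) h T
      = ∑ S ∈ faces C m, piLev C d pid m S * h S := by
  have hadj := sum_piLev_mul_upOp hC hpid hm h (fun _ => 1)
  simp only [mul_one] at hadj
  rw [← hadj]
  refine Finset.sum_congr rfl fun S hS => ?_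
  have hpos := piLev_pos hC hpid (Nat.le_of_succ_le hm) hS
  have hone : upOp C d pid m (fun _ => 1) S = 1 := by
    simp only [upOp, upWith, mul_one]
    rw [← Finset.sum_div, div_self]
    rw [sum_piLev_above hC hpid hm hS]
    positivity
  rw [hone, mul_one]

/-- Jensen for the uniform average over the faces covered by `T`, together with positivity of that
average. -/
lemma downOp_log_le {C : Finset (Finset E)} {d m : ℕ} (hC : IsPureComplex C d)
    {g : Finset E → ℝ} (hg : ∀ S ∈ faces C m, 0 < g S) {T : Finset E}
    (hT : T ∈ faces C (m + 1)) :
    0 < downOp (m + 1) g T ∧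
      downOp (m + 1) (fun S => Real.log (g S)) T ≤ Real.log (downOp (m + 1) g T) := by
  have hcard : T.card = m + 1 := (mem_faces.1 hT).2
  have hpos : ∀ i ∈ T, 0 < g (T.erase i) := fun i hi => hg _ (erase_mem_faces hC hT hi)
  refine ⟨mul_pos (by positivity)
    (Finset.sum_pos hpos (Finset.card_pos.1 (by omega))), ?_⟩
  have hJ := strictConcaveOn_log_Ioi.concaveOn.le_map_sum (t := T)
    (w := fun _ => 1 / ((m + 1 : ℕ) : ℝ)) (p := fun i => g (T.erase i))
    (fun _ _ => by positivity)
    (by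
      rw [Finset.sum_const, hcard, nsmul_eq_mul]
      exact mul_one_div_cancel (by positivity))
    hpos
  simpa only [downOp, smul_eq_mul, ← Finset.mul_sum] using hJ

/-- **Entropy decay of the up-down walk.** For `1 ≤ k ≤ d` and strictly positive
`g : C(k-1) → ℝ`, `𝔈_{P_{k-1}^∧}(g, log g) ≥ Ent_{π_{k-1}}(g) - Ent_{π_k}(P_k^↓ g)`. -/
theorem ent_decay_up_down {E : Type*} [Fintype E] [DecidableEq E]
    (C : Finset (Finset E)) (d : ℕ) (pid : Finset E → ℝ)
    (hC : IsPureComplex C d) (hpid : IsTopDist C d pid)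
    (k : ℕ) (hk1 : 1 ≤ k) (hkd : k ≤ d) (g : Finset E → ℝ)
    (hg : ∀ S ∈ faces C (k-1), 0 < g S) :
    pDiri (piLev C d pid (k-1)) (faces C (k-1)) (upDown C d pid (k-1)) g
        (fun x => Real.log (g x)) ≥
      pEnt (piLev C d pid (k-1)) (faces C (k-1)) g -
        pEnt (piLev C d pid k) (faces C k) (downOp k g) := by
  obtain ⟨m, rfl⟩ : ∃ m, k = m + 1 := ⟨k - 1, by omega⟩
  simp only [Nat.add_sub_cancel] at hg ⊢
  have hmean := sum_piLev_mul_downOp hC hpid hkd g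
  have hadj := sum_piLev_mul_upOp hC hpid hkd g
    (downOp (m + 1) (fun x => Real.log (g x)))
  have hD : pDiri (piLev C d pid m) (faces C m) (upDown C d pid m) g (fun x => Real.log (g x))
      = ∑ S ∈ faces C m, piLev C d pid m S * (g S * Real.log (g S))
        - ∑ T ∈ faces C (m + 1), piLev C d pid (m + 1) T * downOp (m + 1) g T *
            downOp (m + 1) (fun x => Real.log (g x)) T := by
    rw [← hadj, ← Finset.sum_sub_distrib]
    refine Finset.sum_congr rfl fun S _ => ?_
    rw [upDown]
    ring
  have hJ : ∑ T ∈ faces C (m + 1), piLev C d pid (m + 1) T * downOp (m + 1) g T *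
        downOp (m + 1) (fun x => Real.log (g x)) T
      ≤ ∑ T ∈ faces C (m + 1), piLev C d pid (m + 1) T *
        (downOp (m + 1) g T * Real.log (downOp (m + 1) g T)) := by
    refine Finset.sum_le_sum fun T hT => ?_
    obtain ⟨hpos, hlog⟩ := downOp_log_le hC hg hT
    rw [← mul_assoc]
    exact mul_le_mul_of_nonneg_left hlog (mul_nonneg (piLev_nonneg hC hpid _ _) hpos.le)
  rw [hD]
  unfold pEnt
  rw [hmean]
  linarith
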